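/- Define ψ(t) = 2^{√(log₂(1+t))} − 1, g0 = sup_{k≥0} 2^{k−k²} χ_{[0,2^{k²})}, and a(t,g0) = (1/ψ(t)) ∫_0^t g0(s) ds. Then lim_{n→∞} a(2^{n²}, g0) = 2 and lim_{n→∞} a(2^{(n+1/2)²}, g0) = √2. Consequently limsup_{t→∞} a(t,g0) ≥ 2 > √2 ≥ liminf_{t→∞} a(t,g0), so lim_{t→∞} a(t,g0) does not exist. -/

import Mathlib

open MeasureTheory Filter Set

/-- `ψ(t) = 2^√(log₂(1+t)) - 1`. -/
noncomputable def psi0 : ℝ → ℝ := fun t => (2:ℝ) ^ Real.sqrt (Real.logb 2 (1 + t)) - 1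

/-- `g0 = sup_{k ≥ 0} 2^(k - k²) χ_[0, 2^(k²))`. -/
noncomputable def g0 : ℝ → ℝ := fun t =>
  ⨆ k : ℕ, if t < (2:ℝ) ^ (k ^ 2) then (2:ℝ) ^ ((k : ℤ) - (k : ℤ) ^ 2) else 0

/-- `a(t, g0) = (1/ψ(t)) ∫_0^t g0(s) ds`. -/
noncomputable def aG : ℝ → ℝ := fun t => (∫ s in (0:ℝ)..t, g0 s) / psi0 t

lemma aux_zpow (k : ℕ) : (2:ℝ) ^ ((k : ℤ) - (k : ℤ) ^ 2) ≤ 1 := by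
  apply zpow_le_one_of_nonpos₀ (by norm_num)
  rcases Nat.eq_zero_or_pos k with h | h
  · subst h; simp
  · have : (1:ℤ) ≤ k := by exact_mod_cast h
    nlinarith

lemma aux_bdd (t : ℝ) : BddAbove (range (fun k : ℕ =>
    if t < (2:ℝ) ^ (k ^ 2) then (2:ℝ) ^ ((k : ℤ) - (k : ℤ) ^ 2) else 0)) := by
  refine ⟨1, ?_⟩
  rintro _ ⟨k, rfl⟩
  dsimp only
  split_ifs
  · exact aux_zpow k
  · norm_num

lemma g0_lt_one (t : ℝ) (ht : t < 1) : g0 t = 1 := by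
  unfold g0
  apply le_antisymm
  · apply ciSup_le
    intro k
    split_ifs
    · exact aux_zpow k
    · norm_num
  · have := le_ciSup (aux_bdd t) 0
    simpa [ht] using this

lemma g0_on (n : ℕ) (t : ℝ) (h1 : (2:ℝ) ^ (n ^ 2) ≤ t) (h2 : t < (2:ℝ) ^ ((n+1) ^ 2)) :
    g0 t = ((2:ℝ) ^ n * 2 ^ (n ^ 2))⁻¹ := by
  have hv : (2:ℝ) ^ (((n+1 : ℕ) : ℤ) - ((n+1 : ℕ) : ℤ) ^ 2) = ((2:ℝ) ^ n * 2 ^ (n ^ 2))⁻¹ := by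
    rw [← pow_add, ← zpow_natCast, ← zpow_neg]
    congr 1
    push_cast; ring
  unfold g0
  apply le_antisymm
  · apply ciSup_le
    intro k
    split_ifs with h
    · rw [← hv]
      apply zpow_le_zpow_right₀ (by norm_num)
      have hk : n ^ 2 < k ^ 2 := (pow_lt_pow_iff_right₀ (by norm_num : (1:ℝ) < 2)).1 (h1.trans_lt h)
      have hk' : n + 1 ≤ k := lt_of_pow_lt_pow_left₀ 2 (by positivity) hk
      have : ((n+1 : ℕ) : ℤ) ≤ k := by exact_mod_cast hk'
      push_cast at this ⊢
      nlinarith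
    · positivity
  · have := le_ciSup (aux_bdd t) (n+1)
    rw [← hv]
    simpa [h2] using this

lemma piece (a b c : ℝ) (hab : a ≤ b) (h : ∀ t, a ≤ t → t < b → g0 t = c) :
    IntervalIntegrable g0 volume a b ∧ ∫ s in a..b, g0 s = c * (b - a) := by
  have e : ∀ t ∈ Ioo a b, g0 t = c := fun t ht => h t ht.1.le ht.2
  constructor
  · refine (intervalIntegrable_const (c := c)).congr_uIoo ?_
    rw [uIoo_of_le hab]
    exact fun t ht => (e t ht).symm
  · have : ∫ s in a..b, g0 s = ∫ s in a..b, c := by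
      apply intervalIntegral.integral_congr_uIoo
      rw [uIoo_of_le hab]
      exact fun t ht => e t ht
    rw [this]; simp; ring

lemma mono_pts (n : ℕ) : (2:ℝ) ^ (n ^ 2) ≤ 2 ^ ((n+1)^2) := by
  apply pow_le_pow_right₀ (by norm_num)
  exact Nat.pow_le_pow_left (by omega) 2

lemma F_pt (n : ℕ) : IntervalIntegrable g0 volume 0 ((2:ℝ) ^ (n ^ 2)) ∧
    ∫ s in (0:ℝ)..(2:ℝ) ^ (n ^ 2), g0 s = 2 * 2 ^ n - 3 + 2 * ((2:ℝ) ^ n)⁻¹ := by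
  induction n with
  | zero =>
    have := piece 0 1 1 (by norm_num) (fun t _ h => g0_lt_one t h)
    norm_num at this ⊢
    exact this
  | succ n ih =>
    have := piece _ _ _ (mono_pts n) (g0_on n)
    refine ⟨ih.1.trans this.1, ?_⟩
    rw [← intervalIntegral.integral_add_adjacent_intervals ih.1 this.1, ih.2, this.2]
    have e : (2:ℝ) ^ ((n+1)^2) = 2 ^ (n^2) * (2 ^ n * 2 ^ n * 2) := by ring
    rw [e, pow_succ]
    have h1 : (2:ℝ) ^ n ≠ 0 := by positivity
    have h2 : (2:ℝ) ^ (n^2) ≠ 0 := by positivity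
    field_simp
    ring

lemma F_on (n : ℕ) (t : ℝ) (h1 : (2:ℝ) ^ (n ^ 2) ≤ t) (h2 : t ≤ (2:ℝ) ^ ((n+1) ^ 2)) :
    ∫ s in (0:ℝ)..t, g0 s = 2 * 2 ^ n - 3 + 2 * ((2:ℝ) ^ n)⁻¹ +
      ((2:ℝ) ^ n * 2 ^ (n ^ 2))⁻¹ * (t - 2 ^ (n^2)) := by
  have := piece _ t _ h1 (fun s hs hs' => g0_on n s hs (hs'.trans_le h2))
  rw [← intervalIntegral.integral_add_adjacent_intervals (F_pt n).1 this.1, (F_pt n).2, this.2]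

lemma psi_lower (x t : ℝ) (hx : 0 ≤ x) (ht : (2:ℝ) ^ (x ^ 2) ≤ t) : (2:ℝ) ^ x - 1 ≤ psi0 t := by
  unfold psi0
  have : x ≤ Real.sqrt (Real.logb 2 (1 + t)) := by
    apply Real.le_sqrt_of_sq_le
    have hp : (0:ℝ) < (2:ℝ) ^ (x ^ 2) := by positivity
    rw [Real.le_logb_iff_rpow_le (by norm_num) (by linarith)]
    linarith
  have := Real.rpow_le_rpow_of_exponent_le (by norm_num : (1:ℝ) ≤ 2) this
  linarith

lemma psi_upper (x : ℝ) (hx : 0 < x) : psi0 ((2:ℝ) ^ (x ^ 2)) ≤ (2:ℝ) ^ x * 2 ^ (1 / x) := by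
  unfold psi0
  have : Real.sqrt (Real.logb 2 (1 + (2:ℝ) ^ (x ^ 2))) ≤ x + 1 / x := by
    apply Real.sqrt_le_iff.2
    refine ⟨by positivity, ?_⟩
    have h1 : (1:ℝ) ≤ (2:ℝ) ^ (x ^ 2) := Real.one_le_rpow (by norm_num) (by positivity)
    rw [Real.logb_le_iff_le_rpow (by norm_num) (by linarith)]
    calc 1 + (2:ℝ) ^ (x ^ 2) ≤ 2 ^ (x^2) * 2 := by linarith
      _ = 2 ^ (x^2 + 1) := by rw [Real.rpow_add (by norm_num), Real.rpow_one]
      _ ≤ _ := by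
        apply Real.rpow_le_rpow_of_exponent_le (by norm_num)
        have : (x + 1/x)^2 = x^2 + 2 + (1/x)^2 := by field_simp; ring
        rw [this]; nlinarith [sq_nonneg (1/x)]
  have := Real.rpow_le_rpow_of_exponent_le (by norm_num : (1:ℝ) ≤ 2) this
  rw [Real.rpow_add (by norm_num)] at this
  linarith

lemma tend_two : Tendsto (fun x : ℝ => (2:ℝ) ^ x) atTop atTop :=
  tendsto_rpow_atTop_of_base_gt_one 2 (by norm_num)

lemma psi_tend : Tendsto (fun x : ℝ => psi0 ((2:ℝ) ^ (x ^ 2)) / 2 ^ x) atTop (nhds 1) := by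
  have hl : Tendsto (fun x : ℝ => 1 - ((2:ℝ) ^ x)⁻¹) atTop (nhds 1) := by
    simpa using tendsto_const_nhds.sub (tendsto_inv_atTop_zero.comp tend_two)
  have hu : Tendsto (fun x : ℝ => (2:ℝ) ^ (1 / x)) atTop (nhds 1) := by
    have h : Tendsto (fun x : ℝ => 1 / x) atTop (nhds 0) := by
      simpa using tendsto_inv_atTop_zero (𝕜 := ℝ)
    have := (Real.continuous_const_rpow (a := 2) (by norm_num)).tendsto 0 |>.comp h
    simpa [Function.comp_def] using this
  refine tendsto_of_tendsto_of_tendsto_of_le_of_le' hl hu ?_ ?_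
  · filter_upwards [eventually_gt_atTop 0] with x hx
    have hp : (0:ℝ) < (2:ℝ) ^ x := by positivity
    rw [le_div_iff₀ hp, sub_mul, inv_mul_cancel₀ hp.ne', one_mul]
    exact psi_lower x _ hx.le le_rfl
  · filter_upwards [eventually_gt_atTop 0] with x hx
    have hp : (0:ℝ) < (2:ℝ) ^ x := by positivity
    rw [div_le_iff₀ hp, mul_comm]
    exact psi_upper x hx

lemma inv_tend : Tendsto (fun n : ℕ => ((2:ℝ) ^ n)⁻¹) atTop (nhds 0) :=
  tendsto_inv_atTop_zero.comp (tendsto_pow_atTop_atTop_of_one_lt (by norm_num))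

lemma lim1 : Tendsto (fun n : ℕ => aG ((2:ℝ) ^ (n ^ 2))) atTop (nhds 2) := by
  have hp := psi_tend.comp (tendsto_natCast_atTop_atTop (R := ℝ))
  have hn : Tendsto (fun n : ℕ => 2 - 3 * ((2:ℝ) ^ n)⁻¹ + 2 * (((2:ℝ) ^ n)⁻¹ * ((2:ℝ) ^ n)⁻¹))
      atTop (nhds 2) := by
    simpa using (tendsto_const_nhds.sub (inv_tend.const_mul 3)).add
      ((inv_tend.mul inv_tend).const_mul 2)
  have := hn.div hp one_ne_zero
  rw [div_one] at this
  refine this.congr fun n => ?_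
  simp only [Function.comp, aG, Pi.div_apply]
  rw [(F_pt n).2]
  have e : (2:ℝ) ^ ((n:ℝ) ^ 2) = 2 ^ (n^2) := by exact_mod_cast Real.rpow_natCast 2 (n^2)
  rw [e, Real.rpow_natCast]
  have h1 : (2:ℝ) ^ n ≠ 0 := by positivity
  rw [div_div_eq_mul_div]
  congr 1
  field_simp

lemma lim2 : Tendsto (fun n : ℕ => aG ((2:ℝ) ^ (((n:ℝ) + 1/2) ^ 2))) atTop
      (nhds (Real.sqrt 2)) := by
  have hp := psi_tend.comp
    (tendsto_atTop_add_const_right atTop (1/2 : ℝ) (tendsto_natCast_atTop_atTop (R := ℝ)))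
  have hs : (2:ℝ) ^ (1/2 : ℝ) = Real.sqrt 2 := (Real.sqrt_eq_rpow 2).symm
  have hs2 : Real.sqrt 2 * Real.sqrt 2 = 2 := Real.mul_self_sqrt (by norm_num)
  have hs0 : Real.sqrt 2 ≠ 0 := by positivity
  have hn : Tendsto (fun n : ℕ => (2 + ((2:ℝ) ^ (1/4:ℝ) - 3) * ((2:ℝ) ^ n)⁻¹ +
      1 * (((2:ℝ) ^ n)⁻¹ * ((2:ℝ) ^ n)⁻¹)) / Real.sqrt 2)
      atTop (nhds (Real.sqrt 2)) := by
    have := ((tendsto_const_nhds (x := (2:ℝ)).add (inv_tend.const_mul ((2:ℝ) ^ (1/4:ℝ) - 3))).add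
      ((inv_tend.mul inv_tend).const_mul 1)).div_const (Real.sqrt 2)
    simpa using this
  have := hn.div hp one_ne_zero
  rw [div_one] at this
  refine this.congr fun n => ?_
  simp only [Function.comp, aG, Pi.div_apply]
  have e : (2:ℝ) ^ (((n:ℝ) + 1/2) ^ 2) = 2 ^ (n^2) * 2 ^ n * 2 ^ (1/4:ℝ) := by
    rw [show ((n:ℝ) + 1/2) ^ 2 = ((n^2 : ℕ) : ℝ) + (n:ℝ) + 1/4 by push_cast; ring,
      Real.rpow_add (by norm_num), Real.rpow_add (by norm_num), Real.rpow_natCast,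
      Real.rpow_natCast]
  have e0 : ∀ m : ℕ, (2:ℝ) ^ (m^2) = 2 ^ ((m:ℝ)^2) := fun m => by
    exact_mod_cast (Real.rpow_natCast 2 (m^2)).symm
  rw [F_on n]
  · have h1 : (2:ℝ) ^ n ≠ 0 := by positivity
    have h2 : (2:ℝ) ^ (n^2) ≠ 0 := by positivity
    rw [Real.rpow_add (by norm_num) (n:ℝ), Real.rpow_natCast, hs, div_div_eq_mul_div]
    congr 1
    rw [e]
    field_simp
    ring
  · rw [e0]
    apply Real.rpow_le_rpow_of_exponent_le (by norm_num)
    have : (0:ℝ) ≤ n := by positivity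
    nlinarith
  · rw [e0]
    apply Real.rpow_le_rpow_of_exponent_le (by norm_num)
    have : (0:ℝ) ≤ n := by positivity
    push_cast
    nlinarith

lemma exists_n (t : ℝ) (ht : 2 ≤ t) : ∃ n : ℕ, 1 ≤ n ∧ (2:ℝ) ^ (n^2) ≤ t ∧ t ≤ 2 ^ ((n+1)^2) := by
  have hex : ∃ n : ℕ, t < (2:ℝ) ^ (n^2) := by
    obtain ⟨n, hn⟩ := pow_unbounded_of_one_lt t (by norm_num : (1:ℝ) < 2)
    refine ⟨n, hn.trans_le (pow_le_pow_right₀ (by norm_num) ?_)⟩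
    nlinarith [Nat.le_self_pow (n := 2) (by norm_num) n]
  classical
  obtain ⟨m, hm, hmin⟩ : ∃ m : ℕ, t < (2:ℝ) ^ (m^2) ∧ ∀ j < m, ¬ t < (2:ℝ) ^ (j^2) :=
    ⟨Nat.find hex, Nat.find_spec hex, fun j hj => Nat.find_min hex hj⟩
  match m, hm, hmin with
  | 0, hm, _ => norm_num at hm; linarith
  | 1, hm, _ => norm_num at hm; linarith
  | m+2, hm, hmin => exact ⟨m+1, by omega, not_lt.1 (hmin (m+1) (by omega)), hm.le⟩

lemma aG_bounds (t : ℝ) (ht : 2 ≤ t) : 0 ≤ aG t ∧ aG t ≤ 8 := by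
  obtain ⟨n, hn, h1, h2⟩ := exists_n t ht
  have hps := psi_lower n t (by positivity) (by
    have e : (2:ℝ) ^ ((n:ℝ) ^ 2) = 2 ^ (n^2) := by exact_mod_cast Real.rpow_natCast 2 (n^2)
    rw [e]; exact h1)
  rw [Real.rpow_natCast] at hps
  have h2n : (2:ℝ) ≤ 2 ^ n := by
    simpa using pow_le_pow_right₀ (by norm_num : (1:ℝ) ≤ 2) hn
  have hpos : 0 < psi0 t := by linarith
  have hF := F_on n t h1 h2
  have hinv : ((2:ℝ) ^ n)⁻¹ ≤ 1 := inv_le_one_of_one_le₀ (by linarith)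
  have hinv0 : 0 < ((2:ℝ) ^ n)⁻¹ := by positivity
  have hc : 0 ≤ ((2:ℝ) ^ n * 2 ^ (n ^ 2))⁻¹ * (t - 2 ^ (n^2)) :=
    mul_nonneg (by positivity) (by linarith)
  have hc2 : ((2:ℝ) ^ n * 2 ^ (n ^ 2))⁻¹ * (t - 2 ^ (n^2)) ≤ 2 * 2 ^ n := by
    rw [inv_mul_le_iff₀ (by positivity)]
    have e : (2:ℝ) ^ ((n+1)^2) = 2 ^ n * 2 ^ (n^2) * (2 * 2 ^ n) := by ring
    have : (0:ℝ) < 2 ^ (n^2) := by positivity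
    linarith
  unfold aG
  constructor
  · apply div_nonneg _ hpos.le
    rw [hF]; linarith
  · rw [div_le_iff₀ hpos, hF]; linarith

lemma seq1 : Tendsto (fun n : ℕ => (2:ℝ) ^ (n ^ 2)) atTop atTop :=
  (tendsto_pow_atTop_atTop_of_one_lt (by norm_num)).comp (tendsto_pow_atTop (by norm_num))

lemma seq2 : Tendsto (fun n : ℕ => (2:ℝ) ^ (((n:ℝ) + 1/2) ^ 2)) atTop atTop :=
  tend_two.comp ((tendsto_pow_atTop (by norm_num)).comp
    (tendsto_atTop_add_const_right atTop (1/2 : ℝ) (tendsto_natCast_atTop_atTop (R := ℝ))))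

lemma sqrt_two_lt : Real.sqrt 2 < 2 := by
  rw [Real.sqrt_lt' (by norm_num)]; norm_num

/-- `a(2^(n²), g0) → 2` and `a(2^((n+1/2)²), g0) → √2`; hence
`limsup a(·,g0) ≥ 2 > √2 ≥ liminf a(·,g0)` and `lim_{t→∞} a(t,g0)` does not exist. -/
theorem avA_g0_limit_does_not_exist :
    Filter.Tendsto (fun n : ℕ => aG ((2:ℝ) ^ (n ^ 2))) Filter.atTop (nhds 2) ∧
    Filter.Tendsto (fun n : ℕ => aG ((2:ℝ) ^ (((n:ℝ) + 1/2) ^ 2))) Filter.atTop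
      (nhds (Real.sqrt 2)) ∧
    2 ≤ Filter.limsup aG Filter.atTop ∧
    Filter.liminf aG Filter.atTop ≤ Real.sqrt 2 ∧
    Real.sqrt 2 < 2 ∧
    ¬ ∃ L : ℝ, Filter.Tendsto aG Filter.atTop (nhds L) := by
  have hb1 : IsBoundedUnder (· ≤ ·) atTop aG :=
    ⟨8, eventually_map.2 ((eventually_ge_atTop 2).mono fun t ht => (aG_bounds t ht).2)⟩
  have hb2 : IsBoundedUnder (· ≥ ·) atTop aG :=
    ⟨0, eventually_map.2 ((eventually_ge_atTop 2).mono fun t ht => (aG_bounds t ht).1)⟩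
  refine ⟨lim1, lim2, ?_, ?_, sqrt_two_lt, ?_⟩
  · refine le_of_forall_lt fun c hc => ?_
    obtain ⟨d, hcd, hd⟩ := exists_between hc
    refine hcd.trans_le (le_limsup_of_frequently_le ?_ hb1)
    exact seq1.frequently ((lim1.eventually (lt_mem_nhds hd)).mono fun n h => h.le).frequently
  · refine le_of_forall_gt fun c hc => ?_
    obtain ⟨d, hd, hdc⟩ := exists_between hc
    refine (liminf_le_of_frequently_le ?_ hb2).trans_lt hdc
    exact seq2.frequently ((lim2.eventually (gt_mem_nhds hd)).mono fun n h => h.le).frequently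
  · rintro ⟨L, hL⟩
    have a1 := tendsto_nhds_unique (hL.comp seq1) lim1
    have a2 := tendsto_nhds_unique (hL.comp seq2) lim2
    exact sqrt_two_lt.ne (a2.symm.trans a1)
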